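/- arXiv:2603.26484 — 2 statements merged into one kernel-verified Lean document; each statement's English description precedes it below -/
import Mathlib

section
/- A real γ ∈ (0,1) is left-c.e. and covered by some Solovay test (i.e., is left-c.e. and not Martin-Löf random) if and only if γ is covered by a left-c.e. Solovay test. -/
open Filter

/-- A computable approximation of a real `α`: a computable sequence of
rationals in `[0,1]` converging to `α`. -/
def IsCompApprox (a : ℕ → ℚ) (α : ℝ) : Prop :=
  Computable a ∧ (∀ s, a s ∈ Set.Icc (0 : ℚ) 1) ∧
    Tendsto (fun s => (a s : ℝ)) atTop (nhds α)

/-- A d.c.e. approximation: a computable approximation with bounded variation. -/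
def IsDCEApprox (a : ℕ → ℚ) (α : ℝ) : Prop :=
  IsCompApprox a α ∧ Summable (fun s => |(a (s + 1) : ℝ) - (a s : ℝ)|)

/-- A computable order: a nondecreasing unbounded computable function. -/
def IsComputableOrder (f : ℕ → ℕ) : Prop :=
  Computable f ∧ Monotone f ∧ Tendsto f atTop atTop

/-- The liminf (in the extended reals) of `|(α - a (f s)) / (α - a s)|`. -/
noncomputable def speedLiminf (a : ℕ → ℚ) (f : ℕ → ℕ) (α : ℝ) : EReal :=
  Filter.liminf (fun s => ((|(α - (a (f s) : ℝ)) / (α - (a s : ℝ))| : ℝ) : EReal)) atTop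

/-- A computable approximation `a` of `α` is `ρ`-speedable. -/
def IsRhoSpeedable (a : ℕ → ℚ) (α : ℝ) (ρ : ℚ) : Prop :=
  (∃ q : ℚ, α = (q : ℝ)) ∨
    ∃ f, IsComputableOrder f ∧ speedLiminf a f α ≤ (((ρ : ℝ) : EReal))

/-- A computable approximation is speedable if it is `ρ`-speedable for some rational
`ρ ∈ [0,1)`. -/
def IsSpeedable (a : ℕ → ℚ) (α : ℝ) : Prop :=
  ∃ ρ : ℚ, 0 ≤ ρ ∧ ρ < 1 ∧ IsRhoSpeedable a α ρ

/-- A Solovay test: computable sequences of rationals `l i ≤ r i` in `[0,1]`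
with `Σ (r i - l i) < ∞`. -/
structure SolovayTest where
  l : ℕ → ℚ
  r : ℕ → ℚ
  comp_l : Computable l
  comp_r : Computable r
  mem_l : ∀ i, l i ∈ Set.Icc (0 : ℚ) 1
  mem_r : ∀ i, r i ∈ Set.Icc (0 : ℚ) 1
  le : ∀ i, l i ≤ r i
  summable : Summable (fun i => (r i : ℝ) - (l i : ℝ))

/-- A real `γ` is covered by a Solovay test if `γ ∈ [l i, r i]` for infinitely many `i`. -/
def SolovayTest.Covers (T : SolovayTest) (γ : ℝ) : Prop :=
  ∃ᶠ i in atTop, γ ∈ Set.Icc (T.l i : ℝ) (T.r i : ℝ)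

/-- The sequence of endpoints `l 0, r 0, l 1, r 1, …` of a Solovay test. -/
def SolovayTest.endpoints (T : SolovayTest) (n : ℕ) : ℚ :=
  if n % 2 = 0 then T.l (n / 2) else T.r (n / 2)

/-!
A real covered by a test with nondecreasing left endpoints is the limit of these endpoints, since
`l i ≤ γ ≤ r i` infinitely often and `r i - l i → 0`.

Conversely, let `a` be a nondecreasing approximation of `γ` and `T` a test covering `γ`. Whenever
`s` is the first stage with `l i ≤ a s`, put down the interval `[a n, r i]` at the index
`n = ⟨i, s⟩`, provided that `a n ≤ r i`; at all other indices put down the degenerate interval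
`[a n, a n]`. Each `i` is used at most once and `l i ≤ a n`, so the total length does not increase.
If `γ` is irrational and `γ ∈ [l i, r i]`, then `l i < γ`, so the stage `s` exists and
`γ ∈ [a n, r i]`.

The test is computable because the order of `ℚ` is decidable in the encoding of `ℚ` by ranks:
a rational is coded by its position in the increasing enumeration of the codes of the reduced
fractions. An increasing enumeration of a decidable set is computable, so the numerator and the
denominator can be recovered from the rank.
-/

open Encodable

theorem computable_of_strictMono_of_computablePred_range {f : ℕ → ℕ} (hf : StrictMono f)
    (hrange : ComputablePred (· ∈ Set.range f)) : Computable f := by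
  classical
  have hnext_exists (x : ℕ) : ∃ y, x < y ∧ y ∈ Set.range f :=
    ⟨f (x + 1), hf.le_apply, Set.mem_range_self _⟩
  have hnext : Computable fun x => Nat.find (hnext_exists x) := by
    refine Computable.find (P := fun x y => x < y ∧ y ∈ Set.range f) ?_ hnext_exists
    refine Computable.computablePred (.of_eq
      (Primrec.and.to_comp.comp Primrec.nat_lt.decide.to_comp (hrange.decide.comp .snd))
      fun x => ?_)
    simp
  have hsucc (n : ℕ) : f (n + 1) = Nat.find (hnext_exists (f n)) := by
    refine ((Nat.find_eq_iff _).2 ⟨⟨hf n.lt_succ_self, Set.mem_range_self _⟩, ?_⟩).symm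
    rintro _ hlt ⟨hgt, k, rfl⟩
    exact (hf.lt_iff_lt.1 hlt).not_ge (hf.lt_iff_lt.1 hgt)
  refine (Computable.nat_rec Computable.id (Computable.const (f 0))
    (hnext.comp (Computable.snd.comp Computable.snd)).to₂).of_eq fun n => ?_
  induction n with
  | zero => rfl
  | succ n ih => rw [hsucc, ← ih]; rfl

theorem strictMono_encode_ofNat (α : Type*) [Encodable α] [Infinite α] :
    StrictMono fun n => encode (@Denumerable.ofNat α (Denumerable.ofEncodableOfInfinite α) n) := by
  let _ := decidableRangeEncode α
  have : Infinite (Set.range (encode : α → ℕ)) :=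
    Infinite.of_injective _ (Equiv.ofInjective _ encode_injective).injective
  let _ := Nat.Subtype.denumerable (Set.range (encode : α → ℕ))
  have hcode (n : ℕ) : encode (@Denumerable.ofNat α (Denumerable.ofEncodableOfInfinite α) n) =
      Nat.Subtype.ofNat (Set.range (encode : α → ℕ)) n :=
    (congrArg encode (Denumerable.ofEquiv_ofNat _ (equivRangeEncode α) n)).trans
      (congrArg Subtype.val ((equivRangeEncode α).apply_symm_apply _))
  refine strictMono_nat_of_lt_succ fun n => ?_
  rw [hcode, hcode]
  exact Nat.Subtype.lt_succ_self _

theorem computable_encode_of_computablePred_range {α : Type*} [Encodable α] [Infinite α]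
    (hrange : ComputablePred (· ∈ Set.range (encode : α → ℕ))) :
    @Computable α ℕ (@Primcodable.ofDenumerable α (Denumerable.ofEncodableOfInfinite α)) _
      encode := by
  let hα : Denumerable α := Denumerable.ofEncodableOfInfinite α
  have hsurj : Function.Surjective (@Denumerable.ofNat α hα) := fun x =>
    ⟨_, @Denumerable.ofNat_encode α hα x⟩
  have hcodes := computable_of_strictMono_of_computablePred_range (strictMono_encode_ofNat α)
    (hrange.of_eq fun n => by simp only [Set.mem_range, hsurj.exists])
  refine (hcodes.comp (@Computable.encode α _)).of_eq fun x => ?_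
  exact congrArg encode (@Denumerable.ofNat_encode α hα x)

theorem primrecRel_nat_dvd : PrimrecRel ((· ∣ ·) : ℕ → ℕ → Prop) :=
  (Primrec.eq.comp (Primrec.nat_mod.comp .snd .fst) (.const 0)).of_eq fun _ =>
    Nat.dvd_iff_mod_eq_zero.symm

theorem findGreatest_dvd_and_dvd_eq_gcd (m n : ℕ) :
    Nat.findGreatest (fun k => k ∣ m ∧ k ∣ n) (m + n) = m.gcd n := by
  refine Nat.findGreatest_eq_iff.2 ⟨?_, fun _ => ⟨m.gcd_dvd_left n, m.gcd_dvd_right n⟩, ?_⟩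
  · rcases n.eq_zero_or_pos with rfl | hn
    · simp
    · exact (Nat.gcd_le_right m hn).trans (Nat.le_add_left n m)
  · rintro k hgcd hk ⟨hkm, hkn⟩
    have : 0 < m.gcd n := Nat.gcd_pos_iff.2 (by omega)
    exact hgcd.not_ge (Nat.le_of_dvd this (Nat.dvd_gcd hkm hkn))

theorem primrec₂_nat_gcd : Primrec₂ Nat.gcd := by
  have hdvd : PrimrecRel fun (x : ℕ × ℕ) k => k ∣ x.1 ∧ k ∣ x.2 :=
    (primrecRel_nat_dvd.comp .snd (Primrec.fst.comp .fst)).and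
      (primrecRel_nat_dvd.comp .snd (Primrec.snd.comp .fst))
  exact (Primrec.nat_findGreatest (Primrec.nat_add.comp .fst .snd) hdvd).of_eq fun x =>
    findGreatest_dvd_and_dvd_eq_gcd x.1 x.2

theorem primrec_intEquivNatSumNat : Primrec Equiv.intEquivNatSumNat := by
  refine Primrec.encode_iff.1 (Primrec.encode.of_eq fun z => ?_)
  cases z <;> rfl

theorem primrec_int_toNat : Primrec Int.toNat := by
  refine (Primrec.sumCasesOn primrec_intEquivNatSumNat Primrec.snd.to₂
    (Primrec.const 0).to₂).of_eq fun z => ?_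
  cases z <;> rfl

theorem primrec_int_toNat_neg : Primrec fun z : ℤ => (-z).toNat := by
  refine (Primrec.sumCasesOn primrec_intEquivNatSumNat (Primrec.const 0).to₂
    (Primrec.succ.comp Primrec.snd).to₂).of_eq fun z => ?_
  cases z with
  | ofNat n => exact (Int.toNat_neg_natCast n).symm
  | negSucc n => rfl

theorem primrec_int_natAbs : Primrec Int.natAbs :=
  (Primrec.nat_add.comp primrec_int_toNat primrec_int_toNat_neg).of_eq fun z => by omega

/-- The default code of a rational is its rank. `Rat.instEncodable` is the encoding being ranked, in
which a rational is coded as a reduced fraction. -/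
theorem encode_rat_eq (q : ℚ) : @encode ℚ Rat.instEncodable q = encode (q.num, q.den) := rfl

theorem mem_range_encode_rat_iff (n : ℕ) :
    n ∈ Set.range (@encode ℚ Rat.instEncodable) ↔
      0 < (Denumerable.ofNat (ℤ × ℕ) n).2 ∧
        (Denumerable.ofNat (ℤ × ℕ) n).1.natAbs.gcd (Denumerable.ofNat (ℤ × ℕ) n).2 = 1 := by
  constructor
  · rintro ⟨q, rfl⟩
    rw [encode_rat_eq, Denumerable.ofNat_encode]
    exact ⟨q.den_pos, q.reduced⟩
  · rintro ⟨hpos, hcoprime⟩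
    exact ⟨⟨_, _, hpos.ne', hcoprime⟩,
      (encode_rat_eq _).trans (Denumerable.encode_ofNat (α := ℤ × ℕ) n)⟩

theorem primrecPred_mem_range_encode_rat :
    PrimrecPred (· ∈ Set.range (@encode ℚ Rat.instEncodable)) := by
  have hnum := Primrec.fst.comp (Primrec.ofNat (ℤ × ℕ))
  have hden := Primrec.snd.comp (Primrec.ofNat (ℤ × ℕ))
  exact ((Primrec.nat_lt.comp (.const 0) hden).and (Primrec.eq.comp
    (primrec₂_nat_gcd.comp (primrec_int_natAbs.comp hnum) hden) (.const 1))).of_eq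
      fun n => (mem_range_encode_rat_iff n).symm

theorem computable_rat_num_den : Computable fun q : ℚ => (q.num, q.den) :=
  Computable.encode_iff.1 <|
    (computable_encode_of_computablePred_range
      primrecPred_mem_range_encode_rat.computablePred).of_eq encode_rat_eq

theorem rat_le_iff_toNat (p q : ℚ) : p ≤ q ↔
    p.num.toNat * q.den + p.den * (-q.num).toNat ≤
      q.num.toNat * p.den + q.den * (-p.num).toNat := by
  have hcross (z : ℤ) (d : ℕ) : z * d = z.toNat * d - d * (-z).toNat := by
    conv_lhs => rw [← Int.toNat_sub_toNat_neg z]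
    ring
  have hp := hcross p.num q.den
  have hq := hcross q.num p.den
  rw [Rat.le_iff]
  zify
  constructor <;> intro h <;> linarith

theorem computable₂_rat_decide_le : Computable₂ fun p q : ℚ => decide (p ≤ q) := by
  have hcross : Primrec₂ fun x y : ℤ × ℕ => x.1.toNat * y.2 + x.2 * (-y.1).toNat :=
    Primrec.nat_add.comp
      (Primrec.nat_mul.comp (primrec_int_toNat.comp (Primrec.fst.comp .fst))
        (Primrec.snd.comp .snd))
      (Primrec.nat_mul.comp (Primrec.snd.comp .fst)
        (primrec_int_toNat_neg.comp (Primrec.fst.comp .snd)))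
  exact ((Primrec.nat_le.comp hcross hcross.swap).decide.to_comp.comp
    ((computable_rat_num_den.comp .fst).pair (computable_rat_num_den.comp .snd))).of_eq fun x => by
      simp [rat_le_iff_toNat, Function.swap]

theorem isLeast_setOf_le_iff {α : Type*} [Preorder α] {a : ℕ → α} (hmono : Monotone a) (x : α)
    (s : ℕ) : IsLeast {t | x ≤ a t} s ↔ x ≤ a s ∧ (s = 0 ∨ ¬x ≤ a (s - 1)) := by
  refine and_congr_right fun _ => ⟨fun hlb => ?_, fun hs t (ht : x ≤ a t) => ?_⟩
  · refine or_iff_not_imp_left.2 fun hs0 hx => ?_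
    have := hlb hx
    omega
  · by_contra! hts
    exact hs.elim (by omega) fun hx => hx (ht.trans (hmono (by omega)))

namespace SolovayTest

variable {a : ℕ → ℚ} {γ : ℝ} {T : SolovayTest}

theorem Covers.isCompApprox_l (hT : T.Covers γ) (hmono : Monotone T.l) :
    IsCompApprox T.l γ := by
  have hmonoR : Monotone fun i => (T.l i : ℝ) := Rat.cast_mono.comp hmono
  have hle (i : ℕ) : (T.l i : ℝ) ≤ γ := by
    obtain ⟨j, hij, hj, -⟩ := frequently_atTop.1 hT i
    exact (hmonoR hij).trans hj
  refine ⟨T.comp_l, T.mem_l, tendsto_order.2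
    ⟨fun x hx => ?_, fun x hx => .of_forall fun i => (hle i).trans_lt hx⟩⟩
  have hshort := T.summable.tendsto_atTop_zero.eventually_lt_const (sub_pos.2 hx)
  obtain ⟨i, ⟨-, hγr⟩, hi⟩ := (hT.and_eventually hshort).exists
  filter_upwards [eventually_ge_atTop i] with j hij
  linarith [hmonoR hij]

/-- The test all of whose intervals are the single rational point `q`. -/
def point (q : ℚ) (hq : q ∈ Set.Icc (0 : ℚ) 1) : SolovayTest where
  l _ := q
  r _ := q
  comp_l := .const q
  comp_r := .const q
  mem_l _ := hq
  mem_r _ := hq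
  le _ := le_rfl
  summable := by simp

theorem point_covers (q : ℚ) (hq : q ∈ Set.Icc (0 : ℚ) 1) : (point q hq).Covers q :=
  .of_forall fun _ => ⟨le_rfl, le_rfl⟩

/-- The codes `n = ⟨i, s⟩` such that `s` is the first stage at which `a` reaches `T.l i`, while
`a n` does not exceed `T.r i`. The upper bound concerns `a n` rather than `a s` because `a n` is the
left endpoint placed at the index `n`. -/
def hits (T : SolovayTest) (a : ℕ → ℚ) : Set ℕ :=
  {n | IsLeast {s | T.l n.unpair.1 ≤ a s} n.unpair.2 ∧ a n ≤ T.r n.unpair.1}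

theorem injOn_unpair_fst_hits : Set.InjOn (fun n => n.unpair.1) (T.hits a) := by
  rintro m ⟨hm, -⟩ n ⟨hn, -⟩ (hmn : m.unpair.1 = n.unpair.1)
  rw [← hmn] at hn
  rw [← m.pair_unpair, ← n.pair_unpair, hmn, hm.unique hn]

theorem l_le_of_mem_hits (hmono : Monotone a) {n : ℕ} (hn : n ∈ T.hits a) :
    T.l n.unpair.1 ≤ a n :=
  hn.1.1.trans (hmono n.unpair_right_le)

theorem computablePred_mem_hits (ha : Computable a) (hmono : Monotone a) :
    ComputablePred (· ∈ T.hits a) := by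
  have hi : Computable fun n : ℕ => n.unpair.1 := Computable.fst.comp Primrec.unpair.to_comp
  have hs : Computable fun n : ℕ => n.unpair.2 := Computable.snd.comp Primrec.unpair.to_comp
  have hl := T.comp_l.comp hi
  have hreach := computable₂_rat_decide_le.comp hl (ha.comp hs)
  have hzero := Primrec.eq.decide.to_comp.comp hs (Computable.const 0)
  have hearlier := computable₂_rat_decide_le.comp hl (ha.comp (Computable.pred.comp hs))
  have hinside := computable₂_rat_decide_le.comp ha (T.comp_r.comp hi)
  have hfirst := Primrec.and.to_comp.comp hreach
    (Primrec.or.to_comp.comp hzero (Primrec.not.to_comp.comp hearlier))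
  have hdecide := Primrec.and.to_comp.comp hfirst hinside
  refine ComputablePred.computable_iff.2 ⟨_, hdecide, funext fun n => propext ?_⟩
  simp [hits, isLeast_setOf_le_iff hmono]

open Classical in
/-- The right endpoints of the test with left endpoints `a` that ends an interval at `T.r i` only at
the code in `T.hits a` with first component `i`, if there is one, and is degenerate elsewhere. -/
noncomputable def hitRight (T : SolovayTest) (a : ℕ → ℚ) (n : ℕ) : ℚ :=
  if n ∈ T.hits a then T.r n.unpair.1 else a n

theorem le_hitRight (n : ℕ) : a n ≤ T.hitRight a n := by
  unfold hitRight
  split_ifs with hn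
  exacts [hn.2, le_rfl]

theorem computable_hitRight (ha : Computable a) (hmono : Monotone a) :
    Computable (T.hitRight a) := by
  classical
  have hr : Computable fun n : ℕ => T.r n.unpair.1 :=
    T.comp_r.comp (Computable.fst.comp Primrec.unpair.to_comp)
  refine ((computablePred_mem_hits (T := T) ha hmono).decide.cond hr ha).of_eq fun n => ?_
  rw [Bool.cond_decide, hitRight]

theorem summable_hitRight_sub (hmono : Monotone a) :
    Summable fun n => (T.hitRight a n : ℝ) - a n := by
  have hused : Summable ((T.hits a).indicator fun n =>
      (T.r n.unpair.1 : ℝ) - T.l n.unpair.1) :=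
    summable_subtype_iff_indicator.1 (T.summable.comp_injective injOn_unpair_fst_hits.injective)
  refine hused.of_nonneg_of_le (fun n => sub_nonneg.2 (Rat.cast_le.2 (le_hitRight n))) fun n => ?_
  by_cases hn : n ∈ T.hits a
  · have hl : (T.l n.unpair.1 : ℝ) ≤ a n := Rat.cast_le.2 (l_le_of_mem_hits hmono hn)
    rw [hitRight, if_pos hn, Set.indicator_of_mem hn]
    linarith
  · rw [hitRight, if_neg hn, Set.indicator_of_notMem hn, sub_self]

/-- The test `T` rearranged along the nondecreasing approximation `a`, which becomes its sequence of
left endpoints. -/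
noncomputable def rearrange (T : SolovayTest) (ha : IsCompApprox a γ) (hmono : Monotone a) :
    SolovayTest where
  l := a
  r := T.hitRight a
  comp_l := ha.1
  comp_r := computable_hitRight ha.1 hmono
  mem_l := ha.2.1
  mem_r n := by
    unfold hitRight
    split_ifs
    exacts [T.mem_r _, ha.2.1 n]
  le := le_hitRight
  summable := summable_hitRight_sub hmono

theorem Covers.rearrange (hT : T.Covers γ) (ha : IsCompApprox a γ) (hmono : Monotone a)
    (hγ : Irrational γ) : (T.rearrange ha hmono).Covers γ := by
  have hle (n : ℕ) : (a n : ℝ) ≤ γ := (Rat.cast_mono.comp hmono).ge_of_tendsto ha.2.2 n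
  refine frequently_atTop.2 fun N => ?_
  obtain ⟨i, hNi, hl, hr⟩ := frequently_atTop.1 hT N
  obtain ⟨s, hs⟩ : ∃ s, IsLeast {t | T.l i ≤ a t} s := by
    have hlt : (T.l i : ℝ) < γ := hl.lt_of_ne (hγ.ne_rat _).symm
    obtain ⟨t, ht⟩ := (ha.2.2.eventually_const_lt hlt).exists
    exact ⟨_, Nat.isLeast_find ⟨t, Rat.cast_le.1 ht.le⟩⟩
  have hhit : Nat.pair i s ∈ T.hits a := by
    have hinside : a (Nat.pair i s) ≤ T.r i := Rat.cast_le.1 ((hle _).trans hr)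
    simpa only [hits, Set.mem_ofPred_eq, Nat.unpair_pair] using And.intro hs hinside
  refine ⟨Nat.pair i s, hNi.trans (Nat.left_le_pair i s), hle _, ?_⟩
  simpa only [SolovayTest.rearrange, hitRight, if_pos hhit, Nat.unpair_pair] using hr

end SolovayTest

theorem lce_nonrandom_iff_covered_by_lce_test (γ : ℝ)
    (hγ : γ ∈ Set.Ioo (0 : ℝ) 1) :
    ((∃ a : ℕ → ℚ, IsCompApprox a γ ∧ Monotone a) ∧ ∃ T : SolovayTest, T.Covers γ) ↔
      ∃ T : SolovayTest, Monotone T.l ∧ T.Covers γ := by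
  constructor
  · rintro ⟨⟨a, ha, hmono⟩, T, hT⟩
    by_cases hirr : Irrational γ
    · exact ⟨T.rearrange ha hmono, hmono, hT.rearrange ha hmono hirr⟩
    · obtain ⟨q, rfl⟩ := not_not.1 hirr
      have hq : q ∈ Set.Icc (0 : ℚ) 1 := ⟨by exact_mod_cast hγ.1.le, by exact_mod_cast hγ.2.le⟩
      exact ⟨.point q hq, monotone_const, SolovayTest.point_covers q hq⟩
  · rintro ⟨T, hmono, hT⟩
    exact ⟨⟨T.l, hT.isCompApprox_l hmono, hmono⟩, T, hT⟩
end

section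
/- If a real α has a d.c.e. approximation that is ρ-speedable for some rational ρ ∈ [0,1), then α has a d.c.e. approximation that is 0-speedable; in fact α has a d.c.e. approximation that is 0-speedable via the function s ↦ s+1. -/
open Filter

/-!
If the liminf of the ratios is less than `1`, then infinitely often `|α - a s|` is at most a
constant times `|a s - a (f s)|`. Cut the time axis into computable blocks such that `f` moves a
time by at most one block. Then infinitely often `α` is no farther from the first term of a block
than a constant times the variation of `a` over three consecutive blocks. This gives a computable
sequence of balls of summable radii, infinitely many of which contain `α`.

Say that a dyadic cell of level `n` is hit if it meets, up to its length, the `n`-th ball. The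
cells hit have finite total length, and the cell of `α` is hit infinitely often. If a cell is the
`j`-th one hit among those containing it, let its weight be the exponent of `2` in `j`. The weights
of the cells of `α` are unbounded, but by Legendre's formula the weights at any point up to a given
level add up to at most the number of hits, so the total of length times weight over all cells is
still finite. Let `δ t` add up length times weight over the cells that `a` visits for the first
time at time `t`. Then `δ` is summable, and for every `K` there are infinitely many `t` with
`K * |α - a t| ≤ δ t`. In the sequence `a 0 + δ 0, a 0, a 1 + δ 1, a 1, …` the step from
`a t + δ t` to `a t` divides the error by at least `K - 1` at these times.
-/

section ComputableFunctions

variable {σ τ : Type*} [Primcodable σ] [Primcodable τ]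

theorem computable_ite {P : σ → Prop} [DecidablePred P] (hP : ComputablePred P) {f g : σ → τ}
    (hf : Computable f) (hg : Computable g) : Computable fun s => if P s then f s else g s :=
  (Computable.cond hP.decide hf hg).of_eq fun _ => Bool.cond_decide _ _ _

theorem computablePred_comp {P : τ → Prop} (hP : ComputablePred P) {f : σ → τ}
    (hf : Computable f) : ComputablePred fun s => P (f s) := by
  classical
  exact (hP.decide.comp hf).computablePred

theorem computablePred_and {P Q : σ → Prop} (hP : ComputablePred P) (hQ : ComputablePred Q) :
    ComputablePred fun s => P s ∧ Q s := by
  classical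
  refine Computable.computablePred
    ((Primrec.and.to_comp.comp hP.decide hQ.decide).of_eq fun s => ?_)
  rw [Bool.decide_and]

theorem computablePred_eq {f g : σ → τ} (hf : Computable f) (hg : Computable g) :
    ComputablePred fun s => f s = g s := by
  classical
  exact computablePred_comp Primrec.eq.computablePred (hf.pair hg)

theorem computablePred_natLe {f g : σ → ℕ} (hf : Computable f) (hg : Computable g) :
    ComputablePred fun s => f s ≤ g s :=
  computablePred_comp Primrec.nat_le.computablePred (hf.pair hg)

theorem computable_count {P : σ → ℕ → Prop} [DecidableRel P]
    (hP : ComputablePred fun p : σ × ℕ => P p.1 p.2) {f : σ → ℕ} (hf : Computable f) :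
    Computable fun s => Nat.count (P s) (f s) := by
  have hstep : Computable₂ fun (s : σ) (p : ℕ × ℕ) => if P s p.1 then p.2 + 1 else p.2 :=
    computable_ite
      (computablePred_comp hP (Computable.fst.pair (Computable.fst.comp Computable.snd)))
      (Computable.succ.comp (Computable.snd.comp Computable.snd))
      (Computable.snd.comp Computable.snd)
  refine (Computable.nat_rec hf (Computable.const 0) hstep).of_eq fun s => ?_
  induction f s with
  | zero => rfl
  | succ n ih => rw [Nat.count_succ, ← ih]; dsimp only; split_ifs <;> rfl

theorem computablePred_forall_lt {P : σ → ℕ → Prop}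
    (hP : ComputablePred fun p : σ × ℕ => P p.1 p.2) {f : σ → ℕ} (hf : Computable f) :
    ComputablePred fun s => ∀ n < f s, P s n := by
  classical
  refine (computablePred_eq (computable_count (P := fun s n => ¬ P s n) hP.not hf)
    (Computable.const 0)).of_eq fun s => ?_
  simp only [Nat.count_iff_forall_not, not_not]

theorem computable_gcd : Computable₂ Nat.gcd := by
  have hdvd : PrimrecRel fun (p : ℕ × ℕ) (d : ℕ) => p.1 % d = 0 ∧ p.2 % d = 0 :=
    PrimrecPred.primrecRel <|
      (Primrec.eq.comp (Primrec.nat_mod.comp (Primrec.fst.comp Primrec.fst) Primrec.snd)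
        (Primrec.const 0)).and
      (Primrec.eq.comp (Primrec.nat_mod.comp (Primrec.snd.comp Primrec.fst) Primrec.snd)
        (Primrec.const 0))
  refine (Primrec.nat_findGreatest (Primrec.nat_add.comp Primrec.fst Primrec.snd)
    hdvd).to_comp.of_eq fun ⟨a, b⟩ => ?_
  refine Nat.findGreatest_eq_iff.2 ⟨?_, fun _ => ?_, fun d hd _ hdvd => ?_⟩
  · rcases a.eq_zero_or_pos with rfl | ha
    · simp
    · exact (Nat.gcd_le_left b ha).trans (Nat.le_add_right a b)
  · exact ⟨Nat.mod_eq_zero_of_dvd (Nat.gcd_dvd_left a b),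
      Nat.mod_eq_zero_of_dvd (Nat.gcd_dvd_right a b)⟩
  · have hgcd : d ∣ Nat.gcd a b :=
      Nat.dvd_gcd (Nat.dvd_of_mod_eq_zero hdvd.1) (Nat.dvd_of_mod_eq_zero hdvd.2)
    have hzero : Nat.gcd a b = 0 := Nat.eq_zero_of_dvd_of_lt hgcd hd
    have := Nat.gcd_eq_zero_iff.1 hzero
    omega

theorem primrec_two_pow : Primrec fun n : ℕ => 2 ^ n :=
  (Primrec₂.unpaired'.1 Nat.Primrec.pow).comp (Primrec.const 2) Primrec.id

theorem computable_padicValNat_two : Computable (padicValNat 2) := by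
  have hex : ∀ m, ∃ k, m = 0 ∨ ¬ m % 2 ^ (k + 1) = 0 := fun m => by
    rcases eq_or_ne m 0 with rfl | hm
    · exact ⟨0, Or.inl rfl⟩
    · exact ⟨m, Or.inr fun h => (Nat.lt_two_pow_self.trans
        (Nat.pow_lt_pow_right one_lt_two m.lt_succ_self)).not_ge
        (Nat.le_of_dvd (Nat.pos_of_ne_zero hm) (Nat.dvd_of_mod_eq_zero h))⟩
  have hP : PrimrecPred fun p : ℕ × ℕ => p.1 = 0 ∨ ¬ p.1 % 2 ^ (p.2 + 1) = 0 :=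
    (Primrec.eq.comp Primrec.fst (Primrec.const 0)).or
      (Primrec.eq.comp (Primrec.nat_mod.comp Primrec.fst
        (primrec_two_pow.comp (Primrec.succ.comp Primrec.snd))) (Primrec.const 0)).not
  refine (Computable.find hP.computablePred hex).of_eq fun m => ?_
  refine (Nat.find_eq_iff _).2 ⟨?_, fun k hk => ?_⟩
  · refine or_iff_not_imp_left.2 fun hm h => ?_
    exact ((padicValNat_dvd_iff_le hm).1 (Nat.dvd_of_mod_eq_zero h)).not_gt (Nat.lt_succ_self _)
  · have hm : m ≠ 0 := by rintro rfl; simp at hk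
    simpa [hm] using Nat.mod_eq_zero_of_dvd ((padicValNat_dvd_iff_le hm).2 hk)

end ComputableFunctions

section IntegerArithmetic

open Encodable

theorem encode_int_natCast (n : ℕ) : encode (n : ℤ) = 2 * n := rfl

theorem encode_int_negSucc (n : ℕ) : encode (Int.negSucc n) = 2 * n + 1 := rfl

theorem encode_int_succ_div_two (z : ℤ) : (encode z + 1) / 2 = z.natAbs := by
  cases z with
  | ofNat n => rw [Int.ofNat_eq_natCast, encode_int_natCast, Int.natAbs_natCast]; omega
  | negSucc n => rw [encode_int_negSucc, Int.natAbs_negSucc]; omega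

theorem computable_int_natAbs : Computable Int.natAbs :=
  (Primrec.nat_div.comp (Primrec.succ.comp Primrec.encode) (Primrec.const 2)).to_comp.of_eq
    encode_int_succ_div_two

theorem computable_int_toNat : Computable Int.toNat := by
  have heven : PrimrecPred fun z : ℤ => encode z % 2 = 0 :=
    Primrec.eq.comp (Primrec.nat_mod.comp Primrec.encode (Primrec.const 2)) (Primrec.const 0)
  refine (Primrec.ite heven (Primrec.nat_div.comp Primrec.encode (Primrec.const 2))
    (Primrec.const 0)).to_comp.of_eq fun z => ?_
  cases z with
  | ofNat n => simp [encode_int_natCast]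
  | negSucc n => simp [encode_int_negSucc, Nat.add_mod]

theorem computable_int_toNat_neg : Computable fun z : ℤ => (-z).toNat :=
  (Primrec.nat_sub.to_comp.comp computable_int_natAbs computable_int_toNat).of_eq fun z => by
    omega

theorem computable_int_subNatNat : Computable₂ Int.subNatNat := by
  refine Computable.encode_iff.1 ?_
  have hle : PrimrecPred fun p : ℕ × ℕ => p.2 ≤ p.1 := Primrec.nat_le.comp Primrec.snd Primrec.fst
  have hsub : Primrec fun p : ℕ × ℕ => 2 * (p.1 - p.2) :=
    Primrec.nat_mul.comp (Primrec.const 2) (Primrec.nat_sub.comp Primrec.fst Primrec.snd)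
  have hsub' : Primrec fun p : ℕ × ℕ => 2 * (p.2 - p.1) - 1 :=
    Primrec.pred.comp (Primrec.nat_mul.comp (Primrec.const 2)
      (Primrec.nat_sub.comp Primrec.snd Primrec.fst))
  refine (Primrec.ite hle hsub hsub').to_comp.of_eq fun ⟨m, n⟩ => ?_
  dsimp only
  rcases le_or_gt n m with h | h
  · rw [if_pos h, Int.subNatNat_of_le h, encode_int_natCast]
  · rw [if_neg h.not_ge, Int.subNatNat_of_lt h, encode_int_negSucc, Nat.pred_eq_sub_one]
    omega

variable {σ : Type*} [Primcodable σ] {f g : σ → ℤ}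

theorem computable_int_natCast_sub {m n : σ → ℕ} (hm : Computable m) (hn : Computable n) :
    Computable fun s => (m s : ℤ) - n s :=
  (computable_int_subNatNat.comp hm hn).of_eq fun _ => Int.subNatNat_eq_coe

theorem computable_int_natCast {n : σ → ℕ} (hn : Computable n) : Computable fun s => (n s : ℤ) :=
  (computable_int_natCast_sub hn (Computable.const 0)).of_eq fun _ => sub_zero _

theorem computable_int_sub (hf : Computable f) (hg : Computable g) :
    Computable fun s => f s - g s := by
  have hadd := Primrec.nat_add.to_comp
  refine (computable_int_natCast_sub
    (hadd.comp (computable_int_toNat.comp hf) (computable_int_toNat_neg.comp hg))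
    (hadd.comp (computable_int_toNat_neg.comp hf) (computable_int_toNat.comp hg))).of_eq
    fun s => ?_
  push_cast
  linarith [Int.toNat_sub_toNat_neg (f s), Int.toNat_sub_toNat_neg (g s)]

theorem computable_int_add (hf : Computable f) (hg : Computable g) :
    Computable fun s => f s + g s :=
  (computable_int_sub hf (computable_int_sub (Computable.const 0) hg)).of_eq fun s => by
    rw [zero_sub, sub_neg_eq_add]

theorem computable_int_mul (hf : Computable f) (hg : Computable g) :
    Computable fun s => f s * g s := by
  have hadd := Primrec.nat_add.to_comp
  have hmul := Primrec.nat_mul.to_comp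
  have hf₁ := computable_int_toNat.comp hf
  have hf₂ := computable_int_toNat_neg.comp hf
  have hg₁ := computable_int_toNat.comp hg
  have hg₂ := computable_int_toNat_neg.comp hg
  refine (computable_int_natCast_sub (hadd.comp (hmul.comp hf₁ hg₁) (hmul.comp hf₂ hg₂))
    (hadd.comp (hmul.comp hf₁ hg₂) (hmul.comp hf₂ hg₁))).of_eq fun s => ?_
  conv_rhs => rw [← Int.toNat_sub_toNat_neg (f s), ← Int.toNat_sub_toNat_neg (g s)]
  push_cast
  ring

theorem computablePred_int_le (hf : Computable f) (hg : Computable g) :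
    ComputablePred fun s => f s ≤ g s :=
  (computablePred_eq (computable_int_toNat.comp (computable_int_sub hf hg))
    (Computable.const 0)).of_eq fun _ => by rw [Int.toNat_eq_zero, sub_nonpos]

theorem int_ediv_natCast_eq_toNat_sub (z : ℤ) {d : ℕ} (hd : 0 < d) :
    z / d = ((z.toNat / d : ℕ) : ℤ) - (((-z).toNat + d - 1) / d : ℕ) := by
  obtain ⟨e, rfl⟩ := Nat.exists_eq_succ_of_ne_zero hd.ne'
  cases z with
  | ofNat n =>
    have h : (-(Int.ofNat n)).toNat + e.succ - 1 < e.succ := by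
      rw [Int.ofNat_eq_natCast, Int.toNat_neg_natCast]; omega
    rw [Nat.div_eq_of_lt h, Nat.cast_zero, sub_zero]
    rfl
  | negSucc n =>
    have h : (-(Int.negSucc n)).toNat + e.succ - 1 = n + e.succ := by
      rw [Int.neg_negSucc, Int.toNat_natCast]; omega
    rw [Int.negSucc_ediv_ofNat_succ, h, Nat.add_div_right n e.succ_pos, Int.toNat_negSucc,
      Nat.zero_div, Int.negSucc_eq]
    push_cast
    ring

theorem computable_int_ediv_natCast {d : σ → ℕ} (hf : Computable f) (hd : Computable d)
    (hpos : ∀ s, 0 < d s) : Computable fun s => f s / (d s : ℤ) := by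
  have hdiv := Primrec.nat_div.to_comp
  have hneg := computable_int_toNat_neg.comp hf
  refine (computable_int_natCast_sub (hdiv.comp (computable_int_toNat.comp hf) hd)
    (hdiv.comp (Computable.pred.comp (Primrec.nat_add.to_comp.comp hneg hd)) hd)).of_eq
    fun s => (int_ediv_natCast_eq_toNat_sub (f s) (hpos s)).symm

end IntegerArithmetic

section RationalArithmetic

open Encodable

/-- The structural code of a rational: the pair of the codes of its numerator and denominator.
The enumeration of `ℚ` behind its `Primcodable` instance lists the rationals in the order of these
codes. -/
def ratCode (q : ℚ) : ℕ := Nat.pair (encode q.num) q.den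

/-- Being the structural code of a rational in lowest terms. -/
def IsRatCode (m : ℕ) : Prop := 0 < m.unpair.2 ∧ Nat.gcd ((m.unpair.1 + 1) / 2) m.unpair.2 = 1

instance : DecidablePred IsRatCode := fun m => by unfold IsRatCode; infer_instance

theorem isRatCode_iff_mem_range {m : ℕ} : IsRatCode m ↔ m ∈ Set.range ratCode := by
  constructor
  · rintro ⟨hpos, hgcd⟩
    have hnum : encode (Denumerable.ofNat ℤ m.unpair.1) = m.unpair.1 := Denumerable.encode_ofNat _
    refine ⟨⟨Denumerable.ofNat ℤ m.unpair.1, m.unpair.2, hpos.ne', ?_⟩, ?_⟩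
    · rw [← encode_int_succ_div_two, hnum]; exact hgcd
    · exact (congrArg (Nat.pair · m.unpair.2) hnum).trans (Nat.pair_unpair m)
  · rintro ⟨q, rfl⟩
    rw [IsRatCode, ratCode, Nat.unpair_pair, encode_int_succ_div_two]
    exact ⟨q.den_pos, q.reduced⟩

theorem isRatCode_ratCode (q : ℚ) : IsRatCode (ratCode q) :=
  isRatCode_iff_mem_range.2 ⟨q, rfl⟩

theorem encode_ofNat_ofEncodableOfInfinite (β : Type*) [E : Encodable β] [Infinite β] (n : ℕ) :
    E.encode (@Denumerable.ofNat β (.ofEncodableOfInfinite β) n) =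
      Nat.nth (· ∈ Set.range E.encode) n := by
  let _ := decidableRangeEncode β
  let _ : Infinite (Set.range E.encode) := Infinite.of_injective _ (equivRangeEncode β).injective
  let _ := Nat.Subtype.denumerable (Set.range E.encode)
  have hofNat : @Denumerable.ofNat β (.ofEncodableOfInfinite β) n =
      (equivRangeEncode β).symm (Nat.Subtype.ofNat (Set.range E.encode) n) :=
    Denumerable.ofEquiv_ofNat (Set.range E.encode) (equivRangeEncode β) n
  have hval (b : β) : E.encode b = equivRangeEncode β b := rfl
  rw [hofNat, hval, Equiv.apply_symm_apply, ← Nat.Subtype.orderIsoOfNat_apply]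
  exact (Nat.nth_apply_eq_orderIsoOfNat (Set.infinite_range_of_injective encode_injective) n).symm

theorem ratCode_ofNat (n : ℕ) : ratCode (Denumerable.ofNat ℚ n) = Nat.nth IsRatCode n := by
  have hcode : ratCode = Rat.instEncodable.encode := by funext q; cases q; rfl
  have hrange : IsRatCode = (· ∈ Set.range Rat.instEncodable.encode) := by
    funext m; rw [← hcode]; exact propext isRatCode_iff_mem_range
  rw [hcode, hrange]
  exact encode_ofNat_ofEncodableOfInfinite ℚ n

theorem encode_rat_eq_count (q : ℚ) :
    Primcodable.toEncodable.encode q = Nat.count IsRatCode (ratCode q) := by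
  have hinj : Function.Injective ratCode := fun p q h => by
    rw [ratCode, ratCode, Nat.pair_eq_pair, encode_inj] at h
    exact Rat.ext h.1 h.2
  have hinf : (Set.ofPred IsRatCode).Infinite :=
    (Set.infinite_range_of_injective hinj).mono fun m => isRatCode_iff_mem_range.2
  conv_rhs => rw [← Denumerable.ofNat_encode q, ratCode_ofNat]
  exact (Nat.count_nth_of_infinite hinf _).symm

theorem computablePred_isRatCode : ComputablePred IsRatCode :=
  computablePred_and
    (Primrec.nat_lt.comp (Primrec.const 0) (Primrec.snd.comp Primrec.unpair)).computablePred
    (computablePred_eq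
      (computable_gcd.comp (Primrec.nat_div.comp (Primrec.succ.comp
        (Primrec.fst.comp Primrec.unpair)) (Primrec.const 2)).to_comp
        (Primrec.snd.comp Primrec.unpair).to_comp)
      (Computable.const 1))

theorem computable_count_isRatCode : Computable (Nat.count IsRatCode) :=
  computable_count (P := fun _ : ℕ => IsRatCode)
    (computablePred_comp computablePred_isRatCode Computable.snd) Computable.id

theorem computable_ratCode : Computable ratCode := by
  have hex (q : ℚ) : ∃ m, IsRatCode m ∧ Nat.count IsRatCode m = Primcodable.toEncodable.encode q :=
    ⟨ratCode q, isRatCode_ratCode q, (encode_rat_eq_count q).symm⟩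
  have hP : ComputablePred fun p : ℚ × ℕ =>
      IsRatCode p.2 ∧ Nat.count IsRatCode p.2 = Primcodable.toEncodable.encode p.1 :=
    computablePred_and (computablePred_comp computablePred_isRatCode Computable.snd)
      (computablePred_eq (computable_count_isRatCode.comp Computable.snd)
        (Computable.encode.comp Computable.fst))
  refine (Computable.find hP hex).of_eq fun q => ?_
  have hfind := Nat.find_spec (hex q)
  exact Nat.count_injective hfind.1 (isRatCode_ratCode q)
    (hfind.2.trans (encode_rat_eq_count q))

theorem computable_rat_den : Computable Rat.den :=
  (Computable.snd.comp (Computable.unpair.comp computable_ratCode)).of_eq fun q => by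
    rw [ratCode, Nat.unpair_pair]

theorem computable_rat_num : Computable Rat.num := by
  refine ((Computable.ofNat ℤ).comp
    (Computable.fst.comp (Computable.unpair.comp computable_ratCode))).of_eq fun q => ?_
  rw [ratCode, Nat.unpair_pair, Denumerable.ofNat_encode]

variable {σ : Type*} [Primcodable σ]

theorem computable_of_num_den {f : σ → ℚ} (hnum : Computable fun s => (f s).num)
    (hden : Computable fun s => (f s).den) : Computable f := by
  refine Computable.encode_iff.1 ?_
  refine (computable_count_isRatCode.comp
    (Primrec₂.natPair.to_comp.comp (Computable.encode.comp hnum) hden)).of_eq fun s => ?_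
  exact (encode_rat_eq_count (f s)).symm

theorem computable_mkRat {n : σ → ℤ} {d : σ → ℕ} (hn : Computable n) (hd : Computable d)
    (hpos : ∀ s, 0 < d s) : Computable fun s => mkRat (n s) (d s) := by
  have hgcd : Computable fun s => (d s).gcd (n s).natAbs :=
    computable_gcd.comp hd (computable_int_natAbs.comp hn)
  refine computable_of_num_den
    ((computable_int_ediv_natCast hn hgcd fun s => Nat.gcd_pos_of_pos_left _ (hpos s)).of_eq
      fun s => ?_)
    ((Primrec.nat_div.to_comp.comp hd hgcd).of_eq fun s => ?_)
  · rw [Rat.num_mkRat, if_neg (hpos s).ne']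
  · rw [Rat.den_mkRat, if_neg (hpos s).ne']

theorem computable_rat_natCast {n : σ → ℕ} (hn : Computable n) : Computable fun s => (n s : ℚ) :=
  computable_of_num_den (computable_int_natCast hn) (Computable.const 1)

theorem computable_rat_intCast {n : σ → ℤ} (hn : Computable n) : Computable fun s => (n s : ℚ) :=
  computable_of_num_den hn (Computable.const 1)

variable {f g : σ → ℚ}

theorem computable_rat_add (hf : Computable f) (hg : Computable g) :
    Computable fun s => f s + g s := by
  have hf' := computable_rat_den.comp hf
  have hg' := computable_rat_den.comp hg
  refine (computable_mkRat (computable_int_add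
    (computable_int_mul (computable_rat_num.comp hf) (computable_int_natCast hg'))
    (computable_int_mul (computable_rat_num.comp hg) (computable_int_natCast hf')))
    (Primrec.nat_mul.to_comp.comp hf' hg')
    fun s => Nat.mul_pos (f s).den_pos (g s).den_pos).of_eq fun s => (Rat.add_def' _ _).symm

theorem computable_rat_mul (hf : Computable f) (hg : Computable g) :
    Computable fun s => f s * g s :=
  (computable_mkRat (computable_int_mul (computable_rat_num.comp hf) (computable_rat_num.comp hg))
    (Primrec.nat_mul.to_comp.comp (computable_rat_den.comp hf) (computable_rat_den.comp hg))
    fun s => Nat.mul_pos (f s).den_pos (g s).den_pos).of_eq fun _ => (Rat.mul_def' _ _).symm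

theorem computable_rat_sub (hf : Computable f) (hg : Computable g) :
    Computable fun s => f s - g s :=
  (computable_rat_add hf (computable_rat_mul (Computable.const (-1)) hg)).of_eq fun s => by ring

theorem computablePred_rat_le (hf : Computable f) (hg : Computable g) :
    ComputablePred fun s => f s ≤ g s :=
  (computablePred_int_le
    (computable_int_mul (computable_rat_num.comp hf)
      (computable_int_natCast (computable_rat_den.comp hg)))
    (computable_int_mul (computable_rat_num.comp hg)
      (computable_int_natCast (computable_rat_den.comp hf)))).of_eq fun _ => (Rat.le_iff _ _).symm

theorem computable_rat_min (hf : Computable f) (hg : Computable g) :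
    Computable fun s => min (f s) (g s) :=
  (computable_ite (computablePred_rat_le hf hg) hf hg).of_eq fun _ => (min_def _ _).symm

theorem computable_rat_abs (hf : Computable f) : Computable fun s => |f s| := by
  have hneg := computable_rat_sub (Computable.const 0) hf
  refine (computable_ite (computablePred_rat_le hneg hf) hf hneg).of_eq fun s => ?_
  rw [zero_sub, abs_eq_max_neg, max_comm, max_def]

theorem computable_rat_floor (hf : Computable f) : Computable fun s => ⌊f s⌋ :=
  (computable_int_ediv_natCast (computable_rat_num.comp hf) (computable_rat_den.comp hf)
    fun s => (f s).den_pos).of_eq fun _ => Rat.floor_def'.symm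

theorem computable_rat_sum_range {F : σ → ℕ → ℚ} (hF : Computable₂ F) {n : σ → ℕ}
    (hn : Computable n) : Computable fun s => ∑ i ∈ Finset.range (n s), F s i := by
  have hstep : Computable₂ fun (s : σ) (p : ℕ × ℚ) => p.2 + F s p.1 :=
    computable_rat_add (Computable.snd.comp Computable.snd)
      (hF.comp Computable.fst (Computable.fst.comp Computable.snd))
  refine (Computable.nat_rec hn (Computable.const 0) hstep).of_eq fun s => ?_
  induction n s with
  | zero => rfl
  | succ k ih => rw [Finset.sum_range_succ, ← ih]

theorem computable_rat_two_pow {n : σ → ℕ} (hn : Computable n) :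
    Computable fun s => (2 : ℚ) ^ n s :=
  (computable_rat_natCast (primrec_two_pow.to_comp.comp hn)).of_eq fun _ => by push_cast; rfl

theorem computable_rat_inv_two_pow {n : σ → ℕ} (hn : Computable n) :
    Computable fun s => ((2 : ℚ) ^ n s)⁻¹ :=
  (computable_mkRat (Computable.const 1) (primrec_two_pow.to_comp.comp hn)
    fun _ => Nat.two_pow_pos _).of_eq fun s => by
      rw [Rat.mkRat_eq_div]; push_cast; rw [one_div]

end RationalArithmetic

section DyadicCells

/-- The index `k` of the dyadic cell `[k / 2 ^ n, (k + 1) / 2 ^ n)` of level `n` containing `x`. -/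
noncomputable def dyadicIndex (n : ℕ) (x : ℝ) : ℤ := ⌊2 ^ n * x⌋

theorem dyadicIndex_ratCast (n : ℕ) (q : ℚ) : dyadicIndex n q = ⌊2 ^ n * q⌋ := by
  rw [dyadicIndex, ← Rat.floor_cast (α := ℝ)]
  push_cast
  rfl

theorem dyadicIndex_div_two_pow (n : ℕ) (k : ℤ) : dyadicIndex n (k / 2 ^ n) = k := by
  rw [dyadicIndex, mul_div_cancel₀ _ (by positivity), Int.floor_intCast]

theorem dyadicIndex_eq_ediv {i n : ℕ} (h : i ≤ n) (x : ℝ) :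
    dyadicIndex i x = dyadicIndex n x / (2 ^ (n - i) : ℕ) := by
  rw [dyadicIndex, dyadicIndex, ← Int.floor_div_natCast]
  congr 1
  rw [Nat.cast_pow, Nat.cast_ofNat, eq_div_iff (by positivity), mul_right_comm, ← pow_add,
    Nat.add_sub_cancel' h]

theorem dyadicIndex_congr_of_le {i n : ℕ} (h : i ≤ n) {x y : ℝ}
    (hxy : dyadicIndex n x = dyadicIndex n y) : dyadicIndex i x = dyadicIndex i y := by
  rw [dyadicIndex_eq_ediv h, dyadicIndex_eq_ediv h, hxy]

theorem abs_sub_lt_of_dyadicIndex_eq {n : ℕ} {x y : ℝ} (h : dyadicIndex n x = dyadicIndex n y) :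
    |x - y| < (2 ^ n)⁻¹ := by
  have hlt := Int.abs_sub_lt_one_of_floor_eq_floor h
  rw [← mul_sub, abs_mul, abs_of_pos (by positivity : (0 : ℝ) < 2 ^ n)] at hlt
  rwa [← one_div, lt_div_iff₀' (by positivity)]

theorem measurable_dyadicIndex (n : ℕ) : Measurable (dyadicIndex n) :=
  Int.measurable_floor.comp (measurable_const_mul _)

theorem volume_dyadicIndex_eq (n : ℕ) (k : ℤ) :
    MeasureTheory.volume {x | dyadicIndex n x = k} = ENNReal.ofReal (2 ^ n)⁻¹ := by
  have hcell : {x | dyadicIndex n x = k} = Set.Ico ((k : ℝ) / 2 ^ n) ((k + 1) / 2 ^ n) := by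
    ext x
    have hpos : (0 : ℝ) < 2 ^ n := by positivity
    rw [Set.mem_ofPred_eq, dyadicIndex, Int.floor_eq_iff, Set.mem_Ico, div_le_iff₀' hpos,
      lt_div_iff₀' hpos]
  rw [hcell, Real.volume_Ico, ← sub_div, add_sub_cancel_left, one_div]

theorem eventually_dyadicIndex_eq {α : ℝ} (hα : Irrational α) {b : ℕ → ℝ}
    (hb : Tendsto b atTop (nhds α)) (n : ℕ) :
    ∀ᶠ t in atTop, dyadicIndex n (b t) = dyadicIndex n α := by
  have hirr : Irrational (2 ^ n * α) := by
    exact_mod_cast hα.natCast_mul (Nat.two_pow_pos n).ne'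
  have hlt : (dyadicIndex n α : ℝ) < 2 ^ n * α := (Int.floor_le _).lt_of_ne' (hirr.ne_int _)
  filter_upwards [(hb.const_mul (2 ^ n)).eventually_mem
    (Ioo_mem_nhds hlt (Int.lt_floor_add_one _))] with t ht
  exact Int.floor_eq_iff.2 ⟨ht.1.le, ht.2⟩

end DyadicCells

theorem sum_padicValNat_count (ℓ : ℕ) [Fact ℓ.Prime] (P : ℕ → Prop) [DecidablePred P] (N : ℕ) :
    ∑ n ∈ Finset.range N, (if P n then padicValNat ℓ (Nat.count P (n + 1)) else 0) =
      padicValNat ℓ (Nat.count P N).factorial := by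
  induction N with
  | zero => simp
  | succ N ih =>
    rw [Finset.sum_range_succ, ih, Nat.count_succ]
    split_ifs with hN
    · rw [Nat.factorial_succ, padicValNat.mul (Nat.succ_ne_zero _) (Nat.factorial_ne_zero _),
        add_comm]
    · rw [add_zero, add_zero]

section Boost

open MeasureTheory

variable (H : ℕ → ℤ → Prop) [DecidableRel H]

/-- The weight of `x` at level `n`, where `H n k` means that the dyadic cell `k` of level `n` is
hit: if the cell of `x` is hit for the `j`-th time at level `n`, the weight is the exponent of `2`
in `j`. The weights are unbounded along the hits, but by Legendre's formula their sum
is at most the number of hits. -/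
noncomputable def hitWeight (n : ℕ) (x : ℝ) : ℕ :=
  if H n (dyadicIndex n x) then
    padicValNat 2 (Nat.count (fun i => H i (dyadicIndex i x)) (n + 1))
  else 0

/-- At time `t` the sequence `b` is for the first time since time `n` in its present dyadic cell
of level `n`. -/
def FirstVisit (b : ℕ → ℝ) (n t : ℕ) : Prop :=
  n ≤ t ∧ ∀ u < t, n ≤ u → dyadicIndex n (b u) ≠ dyadicIndex n (b t)

noncomputable instance (b : ℕ → ℝ) (n t : ℕ) : Decidable (FirstVisit b n t) := by
  unfold FirstVisit; infer_instance

/-- The amount by which the approximation `b` is perturbed at time `t`: each cell first visited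
at time `t` pays its length times its weight. -/
noncomputable def boost (b : ℕ → ℝ) (t : ℕ) : ℚ :=
  ∑ n ∈ Finset.range (t + 1), if FirstVisit b n t then hitWeight H n (b t) * ((2 : ℚ) ^ n)⁻¹ else 0

variable {H}

theorem hitWeight_congr {n : ℕ} {x y : ℝ} (h : dyadicIndex n x = dyadicIndex n y) :
    hitWeight H n x = hitWeight H n y := by
  have hcount : Nat.count (fun i => H i (dyadicIndex i x)) (n + 1) =
      Nat.count (fun i => H i (dyadicIndex i y)) (n + 1) := by
    simp only [Nat.count_eq_card_filter_range]
    refine congrArg _ (Finset.filter_congr fun i hi => ?_)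
    rw [dyadicIndex_congr_of_le (Finset.mem_range_succ_iff.1 hi) h]
  rw [hitWeight, hitWeight, hcount, h]

theorem measurable_hitWeight (n : ℕ) : Measurable (hitWeight H n) := by
  have hfactor : hitWeight H n = (fun k : ℤ => hitWeight H n (k / 2 ^ n)) ∘ dyadicIndex n :=
    funext fun x => hitWeight_congr (dyadicIndex_div_two_pow n _).symm
  rw [hfactor]
  exact measurable_from_top.comp (measurable_dyadicIndex n)

theorem sum_hitWeight_le (N : ℕ) (x : ℝ) :
    ∑ n ∈ Finset.range N, hitWeight H n x ≤ Nat.count (fun n => H n (dyadicIndex n x)) N :=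
  (sum_padicValNat_count 2 (fun n => H n (dyadicIndex n x)) N).trans_le
    (padicValNat_factorial_le 2 _)

theorem measurableSet_hit (H : ℕ → ℤ → Prop) (n : ℕ) :
    MeasurableSet {x | H n (dyadicIndex n x)} :=
  measurable_dyadicIndex n (MeasurableSet.of_discrete (s := {k | H n k}))

theorem tsum_lintegral_hitWeight_le :
    ∑' n, ∫⁻ x, hitWeight H n x ≤ ∑' n, volume {x | H n (dyadicIndex n x)} := by
  have hpoint (x : ℝ) : ∑' n, (hitWeight H n x : ENNReal) ≤
      ∑' n, {x | H n (dyadicIndex n x)}.indicator 1 x := by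
    refine ENNReal.tsum_le_of_sum_range_le fun N => ?_
    calc ∑ n ∈ Finset.range N, (hitWeight H n x : ENNReal)
        ≤ Nat.count (fun n => H n (dyadicIndex n x)) N := by
          exact_mod_cast sum_hitWeight_le N x
      _ = ∑ n ∈ Finset.range N, {x | H n (dyadicIndex n x)}.indicator 1 x := by
          simp [Nat.count_eq_card_filter_range, Set.indicator_apply, Finset.sum_boole]
      _ ≤ _ := ENNReal.sum_le_tsum _
  calc ∑' n, ∫⁻ x, hitWeight H n x
      = ∫⁻ x, ∑' n, (hitWeight H n x : ENNReal) :=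
        (lintegral_tsum fun n =>
          (measurable_from_top.comp (measurable_hitWeight n)).aemeasurable).symm
    _ ≤ ∫⁻ x, ∑' n, {x | H n (dyadicIndex n x)}.indicator 1 x := lintegral_mono hpoint
    _ = ∑' n, ∫⁻ x, {x | H n (dyadicIndex n x)}.indicator 1 x :=
        lintegral_tsum fun n => (measurable_one.indicator (measurableSet_hit H n)).aemeasurable
    _ = ∑' n, volume {x | H n (dyadicIndex n x)} := by
        simp only [lintegral_indicator_one (measurableSet_hit H _)]

/-- Distinct first visits at level `n` are visits of disjoint cells, on each of which the weight
is constant. -/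
theorem tsum_firstVisit_hitWeight_le (b : ℕ → ℝ) (n : ℕ) :
    ∑' t, (if FirstVisit b n t then hitWeight H n (b t) * ENNReal.ofReal (2 ^ n)⁻¹ else 0) ≤
      ∫⁻ x, hitWeight H n x := by
  let visited (t : ℕ) : Set ℝ := {x | FirstVisit b n t ∧ dyadicIndex n x = dyadicIndex n (b t)}
  have hmeas (t : ℕ) : MeasurableSet (visited t) :=
    (MeasurableSet.const _).inter (measurable_dyadicIndex n (measurableSet_singleton _))
  have hdisj : Pairwise (Function.onFun Disjoint visited) := by
    refine (pairwise_disjoint_on visited).2 fun u t hut => Set.disjoint_left.2 ?_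
    rintro x ⟨hu, hxu⟩ ⟨ht, hxt⟩
    exact ht.2 u hut hu.1 (hxu.symm.trans hxt)
  have hpay (t : ℕ) :
      (if FirstVisit b n t then hitWeight H n (b t) * ENNReal.ofReal (2 ^ n)⁻¹ else 0) =
        ∫⁻ x in visited t, hitWeight H n x := by
    split_ifs with ht
    · rw [setLIntegral_congr_fun (g := fun _ => (hitWeight H n (b t) : ENNReal)) (hmeas t)
        fun x hx => congrArg _ (hitWeight_congr hx.2), setLIntegral_const]
      simp only [visited, ht, true_and, volume_dyadicIndex_eq]
    · simp only [visited, ht, false_and, Set.ofPred_false, Measure.restrict_empty,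
        lintegral_zero_measure]
  rw [tsum_congr hpay, ← lintegral_iUnion hmeas hdisj]
  exact setLIntegral_le_lintegral _ _

theorem boost_nonneg (b : ℕ → ℝ) (t : ℕ) : 0 ≤ boost H b t :=
  Finset.sum_nonneg fun n _ => by split_ifs <;> positivity

theorem ofReal_boost (b : ℕ → ℝ) (t : ℕ) :
    ENNReal.ofReal (boost H b t) =
      ∑' n, if FirstVisit b n t then hitWeight H n (b t) * ENNReal.ofReal (2 ^ n)⁻¹ else 0 := by
  have hsupp : ∀ n ∉ Finset.range (t + 1),
      (if FirstVisit b n t then hitWeight H n (b t) * ENNReal.ofReal (2 ^ n)⁻¹ else 0) = 0 :=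
    fun n hn => if_neg fun hv => hn (Finset.mem_range_succ_iff.2 hv.1)
  rw [tsum_eq_sum hsupp, boost, Rat.cast_sum, ENNReal.ofReal_sum_of_nonneg]
  · refine Finset.sum_congr rfl fun n _ => ?_
    split_ifs
    · push_cast
      rw [ENNReal.ofReal_mul (Nat.cast_nonneg _), ENNReal.ofReal_natCast]
    · rw [Rat.cast_zero, ENNReal.ofReal_zero]
  · intro n _
    split_ifs <;> positivity

theorem summable_boost (hH : ∑' n, volume {x | H n (dyadicIndex n x)} ≠ ⊤) (b : ℕ → ℝ) :
    Summable fun t => (boost H b t : ℝ) := by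
  have hle : ∑' t, ENNReal.ofReal (boost H b t) ≤ ∑' n, volume {x | H n (dyadicIndex n x)} := by
    simp only [ofReal_boost]
    rw [ENNReal.tsum_comm]
    exact (ENNReal.tsum_le_tsum (tsum_firstVisit_hitWeight_le b)).trans tsum_lintegral_hitWeight_le
  refine (ENNReal.summable_toReal (ne_top_of_le_ne_top hH hle)).congr fun t => ?_
  exact ENNReal.toReal_ofReal (Rat.cast_nonneg.2 (boost_nonneg b t))

theorem exists_hitWeight_eq {α : ℝ} (hhit : ∃ᶠ n in atTop, H n (dyadicIndex n α)) (m : ℕ) :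
    ∃ n ≥ m, hitWeight H n α = m := by
  have hinf : (Set.ofPred fun n => H n (dyadicIndex n α)).Infinite :=
    Nat.frequently_atTop_iff_infinite.1 hhit
  have hle : m ≤ 2 ^ m - 1 := Nat.le_sub_one_of_lt Nat.lt_two_pow_self
  refine ⟨Nat.nth (fun n => H n (dyadicIndex n α)) (2 ^ m - 1),
    hle.trans (Nat.le_nth fun hfin => absurd hfin hinf), ?_⟩
  rw [hitWeight, if_pos (Nat.nth_mem_of_infinite hinf _), Nat.count_nth_succ_of_infinite hinf,
    Nat.sub_add_cancel Nat.one_le_two_pow, padicValNat.prime_pow]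

theorem exists_firstVisit {α : ℝ} (hα : Irrational α) {b : ℕ → ℝ}
    (hb : Tendsto b atTop (nhds α)) (n : ℕ) :
    ∃ t, FirstVisit b n t ∧ dyadicIndex n (b t) = dyadicIndex n α := by
  have hex : ∃ t, n ≤ t ∧ dyadicIndex n (b t) = dyadicIndex n α :=
    ((eventually_ge_atTop n).and (eventually_dyadicIndex_eq hα hb n)).exists
  classical
  obtain ⟨hle, heq⟩ := Nat.find_spec hex
  exact ⟨Nat.find hex, ⟨hle, fun u hu hnu h => Nat.find_min hex hu ⟨hnu, h.trans heq⟩⟩, heq⟩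

theorem frequently_mul_abs_sub_le_boost {α : ℝ} (hα : Irrational α)
    (hhit : ∃ᶠ n in atTop, H n (dyadicIndex n α)) {b : ℕ → ℝ} (hb : Tendsto b atTop (nhds α))
    (K : ℕ) : ∃ᶠ t in atTop, K * |α - b t| ≤ boost H b t := by
  refine frequently_atTop.2 fun T => ?_
  obtain ⟨n, hn, hweight⟩ := exists_hitWeight_eq hhit (max K T)
  obtain ⟨t, hvisit, hcell⟩ := exists_firstVisit hα hb n
  refine ⟨t, (le_max_right K T).trans (hn.trans hvisit.1), ?_⟩
  have hpaid : hitWeight H n (b t) * ((2 : ℚ) ^ n)⁻¹ ≤ boost H b t := by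
    refine (if_pos hvisit).symm.trans_le (Finset.single_le_sum
      (f := fun n => if FirstVisit b n t then hitWeight H n (b t) * ((2 : ℚ) ^ n)⁻¹ else 0)
      (fun i _ => ?_) (Finset.mem_range_succ_iff.2 hvisit.1))
    split_ifs <;> positivity
  rw [hitWeight_congr hcell, hweight] at hpaid
  calc (K : ℝ) * |α - b t| ≤ (max K T : ℕ) * (2 ^ n)⁻¹ := by
        gcongr
        · exact le_max_left K T
        · exact (abs_sub_lt_of_dyadicIndex_eq hcell.symm).le
    _ ≤ boost H b t := by simpa using (Rat.cast_le (K := ℝ)).2 hpaid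

section Computability

variable {σ : Type*} [Primcodable σ]

theorem computable_dyadicIndex {n : σ → ℕ} {x : σ → ℚ} (hn : Computable n) (hx : Computable x) :
    Computable fun s => dyadicIndex (n s) (x s) :=
  (computable_rat_floor (computable_rat_mul (computable_rat_two_pow hn) hx)).of_eq
    fun _ => (dyadicIndex_ratCast _ _).symm

theorem computable_hitWeight (hH : ComputablePred fun p : ℕ × ℤ => H p.1 p.2) {n : σ → ℕ}
    {x : σ → ℚ} (hn : Computable n) (hx : Computable x) :
    Computable fun s => hitWeight H (n s) (x s) :=
  computable_ite (computablePred_comp hH (hn.pair (computable_dyadicIndex hn hx)))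
    (computable_padicValNat_two.comp (computable_count
      (P := fun (s : σ) i => H i (dyadicIndex i (x s)))
      (computablePred_comp hH (Computable.snd.pair
        (computable_dyadicIndex Computable.snd (hx.comp Computable.fst))))
      (Computable.succ.comp hn)))
    (Computable.const 0)

theorem computablePred_firstVisit {b : ℕ → ℚ} (hb : Computable b) :
    ComputablePred fun p : ℕ × ℕ => FirstVisit (fun t => (b t : ℝ)) p.1 p.2 := by
  refine computablePred_and (computablePred_natLe Computable.fst Computable.snd)
    (computablePred_forall_lt
      (P := fun p u => p.1 ≤ u → dyadicIndex p.1 (b u) ≠ dyadicIndex p.1 (b p.2)) ?_ Computable.snd)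
  have hn : Computable fun p : (ℕ × ℕ) × ℕ => p.1.1 := Computable.fst.comp Computable.fst
  have hrevisit := computablePred_and (computablePred_natLe hn Computable.snd) (computablePred_eq
    (computable_dyadicIndex hn (hb.comp Computable.snd))
    (computable_dyadicIndex hn (hb.comp (Computable.snd.comp Computable.fst))))
  exact hrevisit.not.of_eq fun p => not_and

theorem computable_boost (hH : ComputablePred fun p : ℕ × ℤ => H p.1 p.2) {b : ℕ → ℚ}
    (hb : Computable b) : Computable (boost H fun t => (b t : ℝ)) := by
  have hpay : Computable₂ fun t n =>
      if FirstVisit (fun t => (b t : ℝ)) n t then hitWeight H n (b t) * ((2 : ℚ) ^ n)⁻¹ else 0 :=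
    computable_ite
      (computablePred_comp (computablePred_firstVisit hb) (Computable.snd.pair Computable.fst))
      (computable_rat_mul
        (computable_rat_natCast (computable_hitWeight hH Computable.snd (hb.comp Computable.fst)))
        (computable_rat_inv_two_pow Computable.snd))
      (Computable.const 0)
  exact computable_rat_sum_range hpay Computable.succ

end Computability

end Boost

theorem volume_ball_hit_le (c r : ℝ) (n : ℕ) :
    MeasureTheory.volume {x | |dyadicIndex n x / 2 ^ n - c| ≤ r + (2 ^ n)⁻¹} ≤
      ENNReal.ofReal (2 * (r + 2 * (2 ^ n)⁻¹)) := by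
  rw [← Real.volume_closedBall c]
  refine MeasureTheory.measure_mono fun x hx => ?_
  have hcell : |x - dyadicIndex n x / 2 ^ n| < (2 ^ n)⁻¹ :=
    abs_sub_lt_of_dyadicIndex_eq (dyadicIndex_div_two_pow n _).symm
  rw [Metric.mem_closedBall, Real.dist_eq]
  calc |x - c| ≤ |x - dyadicIndex n x / 2 ^ n| + |dyadicIndex n x / 2 ^ n - c| := abs_sub_le _ _ _
    _ ≤ (2 ^ n)⁻¹ + (r + (2 ^ n)⁻¹) := add_le_add hcell.le hx
    _ = r + 2 * (2 ^ n)⁻¹ := by ring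

theorem exists_computable_boost {α : ℝ} (hα : Irrational α) {q r b : ℕ → ℚ} (hq : Computable q)
    (hr : Computable r) (hsum : Summable fun n => (r n : ℝ))
    (hball : ∃ᶠ n in atTop, |α - q n| ≤ r n) (hb : Computable b)
    (hlim : Tendsto (fun t => (b t : ℝ)) atTop (nhds α)) :
    ∃ δ : ℕ → ℚ, Computable δ ∧ (∀ t, 0 ≤ δ t) ∧ Summable (fun t => (δ t : ℝ)) ∧
      ∀ K : ℕ, ∃ᶠ t in atTop, K * |α - b t| ≤ δ t := by
  let H (n : ℕ) (k : ℤ) : Prop := |k * ((2 : ℚ) ^ n)⁻¹ - q n| ≤ r n + (2 ^ n)⁻¹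
  have hH_iff (n : ℕ) (x : ℝ) : H n (dyadicIndex n x) ↔
      |dyadicIndex n x / 2 ^ n - (q n : ℝ)| ≤ r n + (2 ^ n)⁻¹ := by
    simp only [H]
    rw [← Rat.cast_le (K := ℝ), div_eq_mul_inv]
    push_cast
    rfl
  have hH : ComputablePred fun p : ℕ × ℤ => H p.1 p.2 := by
    have hinv : Computable fun p : ℕ × ℤ => ((2 : ℚ) ^ p.1)⁻¹ :=
      computable_rat_inv_two_pow Computable.fst
    exact computablePred_rat_le
      (computable_rat_abs (computable_rat_sub
        (computable_rat_mul (computable_rat_intCast Computable.snd) hinv)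
        (hq.comp Computable.fst)))
      (computable_rat_add (hr.comp Computable.fst) hinv)
  have hvol : ∑' n, MeasureTheory.volume {x | H n (dyadicIndex n x)} ≠ ⊤ := by
    have hgeom : Summable fun n : ℕ => ((2 : ℝ) ^ n)⁻¹ := by
      simpa only [one_div, inv_pow] using summable_geometric_two
    refine ne_top_of_le_ne_top ((hsum.add (hgeom.mul_left 2)).mul_left 2).tsum_ofReal_ne_top
      (ENNReal.tsum_le_tsum fun n => ?_)
    simp only [hH_iff]
    exact volume_ball_hit_le _ _ n
  have hhit : ∃ᶠ n in atTop, H n (dyadicIndex n α) := hball.mono fun n hn => by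
    have hcell : |dyadicIndex n α / 2 ^ n - α| < (2 ^ n)⁻¹ :=
      abs_sub_lt_of_dyadicIndex_eq (dyadicIndex_div_two_pow n _)
    rw [hH_iff]
    linarith [abs_sub_le (dyadicIndex n α / 2 ^ n : ℝ) α (q n)]
  have : DecidableRel H := fun n k => by unfold H; infer_instance
  exact ⟨boost H fun t => (b t : ℝ), computable_boost hH hb, boost_nonneg _, summable_boost hvol _,
    frequently_mul_abs_sub_le_boost hα hhit hlim⟩

section Speedability

theorem exists_frequently_abs_sub_le_mul_of_speedLiminf_lt_one {a : ℕ → ℚ} {f : ℕ → ℕ} {α : ℝ}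
    (h : speedLiminf a f α < 1) :
    ∃ C : ℕ, ∃ᶠ s in atTop, |α - a s| ≤ C * |(a s : ℝ) - a (f s)| := by
  obtain ⟨r, hlim, hr⟩ := EReal.lt_iff_exists_real_btwn.1 h
  have hr : 0 < 1 - r := sub_pos.2 (EReal.coe_lt_coe_iff.1 hr)
  obtain ⟨C, hC⟩ := exists_nat_ge (1 - r)⁻¹
  refine ⟨C, (frequently_lt_of_liminf_lt (by isBoundedDefault) hlim).mono fun s hs => ?_⟩
  rcases (abs_nonneg (α - a s)).eq_or_lt with hzero | hpos
  · rw [← hzero]; positivity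
  rw [EReal.coe_lt_coe_iff, abs_div, div_lt_iff₀ hpos] at hs
  have htri := abs_sub_le α (a (f s)) (a s)
  rw [abs_sub_comm (a (f s) : ℝ)] at htri
  calc |α - a s| ≤ (1 - r)⁻¹ * |(a s : ℝ) - a (f s)| := by
        rw [← div_eq_inv_mul, le_div_iff₀' hr]; linarith
    _ ≤ C * |(a s : ℝ) - a (f s)| := by gcongr

theorem exists_computable_blocks {f : ℕ → ℕ} (hf : IsComputableOrder f) :
    ∃ S : ℕ → ℕ, Computable S ∧ StrictMono S ∧
      ∀ n s, S (n + 1) ≤ s → s ≤ S (n + 2) → S n ≤ f s ∧ f s ≤ S (n + 3) := by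
  obtain ⟨hcomp, hmono, htend⟩ := hf
  have hex (u : ℕ) : ∃ v, u + 1 ≤ v ∧ f u ≤ v ∧ u ≤ f v :=
    (((eventually_ge_atTop _).and (eventually_ge_atTop _)).and
      (htend.eventually_ge_atTop u)).exists.imp fun v hv => ⟨hv.1.1, hv.1.2, hv.2⟩
  let next (u : ℕ) : ℕ := Nat.find (hex u)
  have hnext : Computable next := Computable.find (P := fun u v => u + 1 ≤ v ∧ f u ≤ v ∧ u ≤ f v)
    (computablePred_and (computablePred_natLe (Computable.succ.comp Computable.fst) Computable.snd)
      (computablePred_and (computablePred_natLe (hcomp.comp Computable.fst) Computable.snd)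
        (computablePred_natLe Computable.fst (hcomp.comp Computable.snd)))) hex
  have hspec (u : ℕ) : u + 1 ≤ next u ∧ f u ≤ next u ∧ u ≤ f (next u) := Nat.find_spec (hex u)
  let S (n : ℕ) : ℕ := Nat.rec 0 (fun _ => next) n
  have hS (n : ℕ) : S n + 1 ≤ S (n + 1) ∧ f (S n) ≤ S (n + 1) ∧ S n ≤ f (S (n + 1)) :=
    hspec (S n)
  refine ⟨S, ?_, strictMono_nat_of_lt_succ fun n => (hS n).1, fun n s hle hge => ⟨?_, ?_⟩⟩
  · exact Computable.nat_rec Computable.id (Computable.const 0)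
      (hnext.comp (Computable.snd.comp Computable.snd)).to₂
  · exact (hS n).2.2.trans (hmono hle)
  · exact (hmono hge).trans (hS (n + 2)).2.1

theorem summable_sub_of_monotone {u : ℕ → ℝ} (hmono : Monotone u) {B : ℝ} (hB : ∀ n, u n ≤ B) :
    Summable fun n => u (n + 1) - u n := by
  refine summable_of_sum_range_le (c := B - u 0)
    (fun n => sub_nonneg.2 (hmono n.le_succ)) fun n => ?_
  rw [Finset.sum_range_sub]
  exact sub_le_sub_right (hB n) _

/-- The total variation of the first `n` steps of the sequence `a`. -/
def variation (a : ℕ → ℚ) (n : ℕ) : ℚ := ∑ i ∈ Finset.range n, |a (i + 1) - a i|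

theorem monotone_variation (a : ℕ → ℚ) : Monotone (variation a) :=
  monotone_nat_of_le_succ fun n => by
    rw [variation, variation, Finset.sum_range_succ]
    exact le_add_of_nonneg_right (abs_nonneg _)

theorem abs_sub_le_variation_sub (a : ℕ → ℚ) {x y : ℕ} (h : x ≤ y) :
    |a x - a y| ≤ variation a y - variation a x := by
  induction y, h using Nat.le_induction with
  | base => simp
  | succ y _ ih =>
    rw [variation, Finset.sum_range_succ, ← variation, abs_sub_comm (a (y + 1))]
    linarith [abs_sub_le (a x) (a y) (a (y + 1))]

theorem abs_sub_le_variation_sub_of_mem_Icc (a : ℕ → ℚ) {u v x y : ℕ} (hx : x ∈ Set.Icc u v)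
    (hy : y ∈ Set.Icc u v) : |a x - a y| ≤ variation a v - variation a u := by
  wlog hxy : x ≤ y generalizing x y
  · rw [abs_sub_comm]
    exact this hy hx (le_of_not_ge hxy)
  exact (abs_sub_le_variation_sub a hxy).trans
    (sub_le_sub (monotone_variation a hy.2) (monotone_variation a hx.1))

theorem abs_sub_le_mul_variation_sub {a : ℕ → ℚ} {α : ℝ} {C u v x y z : ℕ}
    (h : |α - a x| ≤ C * |(a x : ℝ) - a y|) (hx : x ∈ Set.Icc u v) (hy : y ∈ Set.Icc u v)
    (hz : z ∈ Set.Icc u v) : |α - a z| ≤ (C + 1) * (variation a v - variation a u) := by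
  have hxy := abs_sub_le_variation_sub_of_mem_Icc a hx hy
  have hxz := abs_sub_le_variation_sub_of_mem_Icc a hx hz
  rify at hxy hxz
  calc |α - a z| ≤ |α - a x| + |(a x : ℝ) - a z| := abs_sub_le _ _ _
    _ ≤ C * (variation a v - variation a u) + (variation a v - variation a u) :=
        add_le_add (h.trans (by gcongr)) hxz
    _ = _ := by ring

theorem summable_variation_sub {a : ℕ → ℚ} (ha : Summable fun s => |(a (s + 1) : ℝ) - a s|)
    {S : ℕ → ℕ} (hS : Monotone S) :
    Summable fun n => (variation a (S (n + 3)) : ℝ) - variation a (S n) := by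
  let u (n : ℕ) : ℝ := variation a (S n)
  have hu : Monotone u := Rat.cast_mono.comp ((monotone_variation a).comp hS)
  have hle (n : ℕ) : u n ≤ ∑' s, |(a (s + 1) : ℝ) - a s| := by
    simpa [u, variation] using ha.sum_le_tsum (Finset.range (S n)) fun _ _ => abs_nonneg _
  have hstep := summable_sub_of_monotone hu hle
  refine ((hstep.add ((summable_nat_add_iff 1).2 hstep)).add
    ((summable_nat_add_iff 2).2 hstep)).congr fun n => ?_
  ring

theorem computable_variation {a : ℕ → ℚ} (ha : Computable a) : Computable (variation a) :=
  computable_rat_sum_range (F := fun _ : ℕ => fun i => |a (i + 1) - a i|)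
    (computable_rat_abs (computable_rat_sub (ha.comp (Computable.succ.comp Computable.snd))
      (ha.comp Computable.snd))) Computable.id

theorem exists_computable_balls {a : ℕ → ℚ} {α : ℝ} (ha : Computable a)
    (hvar : Summable fun s => |(a (s + 1) : ℝ) - a s|) {f : ℕ → ℕ} (hf : IsComputableOrder f)
    {C : ℕ} (hC : ∃ᶠ s in atTop, |α - a s| ≤ C * |(a s : ℝ) - a (f s)|) :
    ∃ q r : ℕ → ℚ, Computable q ∧ Computable r ∧ Summable (fun n => (r n : ℝ)) ∧
      ∃ᶠ n in atTop, |α - q n| ≤ r n := by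
  obtain ⟨S, hScomp, hSmono, hblock⟩ := exists_computable_blocks hf
  have hshift (k : ℕ) : Computable fun n => S (n + k) :=
    hScomp.comp (Primrec.nat_add.to_comp.comp Computable.id (Computable.const k))
  refine ⟨fun n => a (S (n + 1)),
    fun n => (C + 1 : ℚ) * (variation a (S (n + 3)) - variation a (S n)),
    ha.comp (hshift 1), ?_, ?_, frequently_atTop.2 fun N => ?_⟩
  · exact computable_rat_mul (Computable.const _) (computable_rat_sub
      ((computable_variation ha).comp (hshift 3)) ((computable_variation ha).comp hScomp))
  · exact ((summable_variation_sub hvar hSmono.monotone).mul_left (C + 1 : ℝ)).congr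
      fun n => by push_cast; rfl
  · obtain ⟨s, hs, hspeed⟩ := frequently_atTop.1 hC (S (N + 1) + 1)
    have hshift_mono : StrictMono fun m => S (m + (N + 1)) :=
      hSmono.comp (strictMono_id.add_const _)
    obtain ⟨m, hlt, hle⟩ := hshift_mono.exists_between_of_tendsto_atTop
      hshift_mono.tendsto_atTop (x := s) (by simpa using hs)
    refine ⟨m + N, N.le_add_left m, ?_⟩
    have hlow : S (m + N + 1) ≤ s := hlt.le
    have hhigh : s ≤ S (m + N + 2) := by rwa [show m + N + 2 = m + 1 + (N + 1) by ring]
    have hs_mem : s ∈ Set.Icc (S (m + N)) (S (m + N + 3)) :=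
      ⟨(hSmono.monotone (by lia)).trans hlow, hhigh.trans (hSmono.monotone (by lia))⟩
    have hmid_mem : S (m + N + 1) ∈ Set.Icc (S (m + N)) (S (m + N + 3)) :=
      ⟨hSmono.monotone (by lia), hSmono.monotone (by lia)⟩
    push_cast
    exact abs_sub_le_mul_variation_sub hspeed hs_mem (hblock _ s hlow hhigh) hmid_mem

/-- The sequence `b 0 + δ 0, b 0, b 1 + δ 1, b 1, …`. -/
def interleave (b δ : ℕ → ℚ) (s : ℕ) : ℚ := b (s / 2) + if s % 2 = 0 then δ (s / 2) else 0

theorem interleave_even (b δ : ℕ → ℚ) (t : ℕ) : interleave b δ (2 * t) = b t + δ t := by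
  rw [interleave, Nat.mul_mod_right, if_pos rfl, Nat.mul_div_cancel_left t two_pos]

theorem interleave_odd (b δ : ℕ → ℚ) (t : ℕ) : interleave b δ (2 * t + 1) = b t := by
  rw [interleave, Nat.mul_add_mod, if_neg (by decide), add_zero, Nat.mul_add_div two_pos]
  rfl

theorem summable_of_even_odd {f : ℕ → ℝ} (heven : Summable fun t => f (2 * t))
    (hodd : Summable fun t => f (2 * t + 1)) : Summable f :=
  (heven.hasSum.even_add_odd hodd.hasSum).summable

theorem computable_interleave {b δ : ℕ → ℚ} (hb : Computable b) (hδ : Computable δ) :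
    Computable (interleave b δ) := by
  have hhalf : Computable fun s : ℕ => s / 2 :=
    (Primrec.nat_div.comp Primrec.id (Primrec.const 2)).to_comp
  have hmod : Computable fun s : ℕ => s % 2 :=
    (Primrec.nat_mod.comp Primrec.id (Primrec.const 2)).to_comp
  exact computable_rat_add (hb.comp hhalf) (computable_ite
    (computablePred_eq hmod (Computable.const 0)) (hδ.comp hhalf) (Computable.const 0))

theorem isDCEApprox_interleave {b δ : ℕ → ℚ} {α : ℝ} (hb : IsDCEApprox b α) (hδ : Computable δ)
    (hnonneg : ∀ t, 0 ≤ δ t) (hle : ∀ t, b t + δ t ≤ 1) (hsum : Summable fun t => (δ t : ℝ)) :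
    IsDCEApprox (interleave b δ) α := by
  obtain ⟨⟨hcomp, hmem, hlim⟩, hvar⟩ := hb
  have hlower (s : ℕ) : b (s / 2) ≤ interleave b δ s :=
    le_add_of_nonneg_right (ite_nonneg (hnonneg _) le_rfl)
  have hupper (s : ℕ) : interleave b δ s ≤ b (s / 2) + δ (s / 2) := by
    rw [interleave]
    gcongr
    split_ifs
    exacts [le_rfl, hnonneg _]
  have hhalf : Tendsto (fun s : ℕ => s / 2) atTop atTop :=
    Nat.tendsto_div_const_atTop two_ne_zero
  refine ⟨⟨computable_interleave hcomp hδ,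
    fun s => ⟨(hmem _).1.trans (hlower s), (hupper s).trans (hle _)⟩, ?_⟩, ?_⟩
  · have hlim' := hlim.add hsum.tendsto_atTop_zero
    rw [add_zero] at hlim'
    exact tendsto_of_tendsto_of_tendsto_of_le_of_le (hlim.comp hhalf) (hlim'.comp hhalf)
      (fun s => Rat.cast_le.2 (hlower s))
      fun s => (Rat.cast_le.2 (hupper s)).trans_eq (Rat.cast_add _ _)
  · refine summable_of_even_odd (hsum.congr fun t => ?_)
      ((hvar.add ((summable_nat_add_iff 1).2 hsum)).of_nonneg_of_le (fun _ => abs_nonneg _)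
        fun t => ?_)
    · rw [interleave_odd, interleave_even, ← Rat.cast_sub, sub_add_cancel_left, Rat.cast_neg,
        abs_neg, abs_of_nonneg (Rat.cast_nonneg.2 (hnonneg t))]
    · rw [show 2 * t + 1 + 1 = 2 * (t + 1) by ring, interleave_odd, interleave_even, Rat.cast_add,
        add_sub_right_comm]
      exact (abs_add_le _ _).trans_eq
        (congrArg _ (abs_of_nonneg (Rat.cast_nonneg.2 (hnonneg (t + 1)))))

theorem speedLiminf_interleave_le_zero {b δ : ℕ → ℚ} {α : ℝ}
    (h : ∀ K : ℕ, ∃ᶠ t in atTop, K * |α - b t| ≤ δ t) :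
    speedLiminf (interleave b δ) (fun s => s + 1) α ≤ 0 := by
  have hle (K : ℕ) : speedLiminf (interleave b δ) (fun s => s + 1) α ≤
      ((1 / ((K : ℝ) + 1) : ℝ) : EReal) := by
    have hfreq : ∃ᶠ t in atTop, |(α - interleave b δ (2 * t + 1)) / (α - interleave b δ (2 * t))| ≤
        1 / ((K : ℝ) + 1) := by
      refine (h (K + 2)).mono fun t ht => ?_
      rw [interleave_even, interleave_odd, abs_div]
      have hsmall : (K + 1) * |α - b t| ≤ |α - (b t + δ t : ℚ)| := by
        push_cast at ht ⊢
        rw [← sub_sub, abs_sub_comm _ (δ t : ℝ)]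
        linarith [abs_sub_abs_le_abs_sub (δ t : ℝ) (α - b t), le_abs_self (δ t : ℝ)]
      refine div_le_of_le_mul₀ (abs_nonneg _) (by positivity) ?_
      rw [one_div_mul_eq_div, le_div_iff₀' (by positivity)]
      exact hsmall
    refine liminf_le_of_frequently_le' ?_
    refine (tendsto_id.const_mul_atTop' two_pos).frequently (hfreq.mono fun t ht => ?_)
    exact EReal.coe_le_coe_iff.2 ht
  have hlim : Tendsto (fun K : ℕ => ((1 / ((K : ℝ) + 1) : ℝ) : EReal)) atTop (nhds (0 : ℝ)) :=
    (continuous_coe_real_ereal.tendsto 0).comp tendsto_one_div_add_atTop_nhds_zero_nat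
  exact ge_of_tendsto' hlim hle

theorem exists_isDCEApprox_speedLiminf_le_zero {b δ : ℕ → ℚ} {α : ℝ} (hα : α < 1)
    (hb : IsDCEApprox b α) (hδ : Computable δ) (hnonneg : ∀ t, 0 ≤ δ t)
    (hsum : Summable fun t => (δ t : ℝ)) (h : ∀ K : ℕ, ∃ᶠ t in atTop, K * |α - b t| ≤ δ t) :
    ∃ c : ℕ → ℚ, IsDCEApprox c α ∧ speedLiminf c (fun s => s + 1) α ≤ 0 := by
  let δ' (t : ℕ) : ℚ := min (δ t) (1 - b t)
  have hδ'_nonneg (t : ℕ) : 0 ≤ δ' t := le_min (hnonneg t) (sub_nonneg.2 (hb.1.2.1 t).2)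
  have heq : ∀ᶠ t in atTop, δ' t = δ t := by
    have hlim := hb.1.2.2.add hsum.tendsto_atTop_zero
    rw [add_zero] at hlim
    filter_upwards [hlim.eventually_le_const hα] with t ht
    refine min_eq_left (le_sub_iff_add_le'.2 ?_)
    exact_mod_cast ht
  refine ⟨interleave b δ', isDCEApprox_interleave hb ?_ hδ'_nonneg
    (fun t => le_sub_iff_add_le'.1 (min_le_right _ _)) ?_,
    speedLiminf_interleave_le_zero fun K => ?_⟩
  · exact computable_rat_min hδ (computable_rat_sub (Computable.const 1) hb.1.1)
  · exact hsum.of_nonneg_of_le (fun t => Rat.cast_nonneg.2 (hδ'_nonneg t))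
      fun t => Rat.cast_le.2 (min_le_left _ _)
  · refine ((h K).and_eventually heq).mono fun t ht => ?_
    rw [ht.2]
    exact ht.1

end Speedability

theorem dce_speedable_implies_zero_speedable (α : ℝ) (hα : α ∈ Set.Ioo (0 : ℝ) 1)
    (h : ∃ a : ℕ → ℚ, IsDCEApprox a α ∧
      ∃ ρ : ℚ, 0 ≤ ρ ∧ ρ < 1 ∧ IsRhoSpeedable a α ρ) :
    (∃ c : ℕ → ℚ, IsDCEApprox c α ∧ IsRhoSpeedable c α 0) ∧
    (∃ c : ℕ → ℚ, IsDCEApprox c α ∧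
      ((∃ q : ℚ, α = (q : ℝ)) ∨
        speedLiminf c (fun s => s + 1) α ≤ (0 : EReal))) := by
  obtain ⟨a, ha, ρ, -, hρ, hspeed⟩ := h
  by_cases hrat : ∃ q : ℚ, α = q
  · exact ⟨⟨a, ha, Or.inl hrat⟩, a, ha, Or.inl hrat⟩
  have hirr : Irrational α := fun ⟨q, hq⟩ => hrat ⟨q, hq.symm⟩
  obtain ⟨f, hf, hlim⟩ := hspeed.resolve_left hrat
  have hlt : speedLiminf a f α < 1 := hlim.trans_lt (by exact_mod_cast hρ)
  obtain ⟨C, hC⟩ := exists_frequently_abs_sub_le_mul_of_speedLiminf_lt_one hlt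
  obtain ⟨q, r, hq, hr, hsum, hball⟩ := exists_computable_balls ha.1.1 ha.2 hf hC
  obtain ⟨δ, hδ, hδ_nonneg, hδ_sum, hδ_freq⟩ :=
    exists_computable_boost hirr hq hr hsum hball ha.1.1 ha.1.2.2
  obtain ⟨c, hc, hc_zero⟩ :=
    exists_isDCEApprox_speedLiminf_le_zero hα.2 ha hδ hδ_nonneg hδ_sum hδ_freq
  have hsucc : IsComputableOrder fun s => s + 1 :=
    ⟨Computable.succ, fun _ _ h => Nat.succ_le_succ h, tendsto_add_atTop_nat 1⟩
  exact ⟨⟨c, hc, Or.inr ⟨_, hsucc, by simpa using hc_zero⟩⟩, c, hc, Or.inr hc_zero⟩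
end
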